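/- The complex-valued harmonic polynomial p(z) = 30*conj(z)^4 - 30z^2 - 15z - 2 (with analytic part -30z^2 - 15z - 2 and co-analytic part 30z^4) has exactly 10 zeros; that is, the set of complex numbers z with 30*conj(z)^4 = 30z^2 + 15z + 2 is finite of cardinality 10. -/

import Mathlib

/-!
The real zeros of `conj z ^ 4 - z ^ 2 - a * z - b` are the real roots of a quartic. Off the real
axis the imaginary part of the equation determines `(Im z) ^ 2` as a rational function of
`x = Re z`; substituting it into the real part leaves a sextic in `x`, and a real root `x` of this
sextic lifts to a pair of conjugate zeros exactly when the value forced on `(Im z) ^ 2` is positive.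
The third derivative of the sextic is a strictly increasing cubic, so by Rolle's theorem the sextic
has at most four real roots. For `a = 1 / 2` and `b = 1 / 15` sign changes exhibit four real roots
of the quartic and four of the sextic, of which all but one lift, giving `4 + 2 * 3` zeros.
-/

open Polynomial Set
open scoped ComplexConjugate

lemma exists_zero_mem_Ioo_of_mul_neg {f : ℝ → ℝ} (hf : Continuous f) {l u : ℝ} (hlu : l < u)
    (hsign : f l * f u < 0) : ∃ x ∈ Ioo l u, f x = 0 := by
  rcases mul_neg_iff.mp hsign with ⟨hl, hu⟩ | ⟨hl, hu⟩
  · exact intermediate_value_Ioo' hlu.le hf.continuousOn ⟨hu, hl⟩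
  · exact intermediate_value_Ioo hlu.le hf.continuousOn ⟨hl, hu⟩

lemma exists_strictMono_zeros {ι : Type*} [Preorder ι] {f : ℝ → ℝ} (hf : Continuous f)
    {l u : ι → ℝ} (hlu : ∀ i, l i < u i) (hul : ∀ i j, i < j → u i ≤ l j)
    (hsign : ∀ i, f (l i) * f (u i) < 0) :
    ∃ r : ι → ℝ, StrictMono r ∧ ∀ i, r i ∈ Ioo (l i) (u i) ∧ f (r i) = 0 := by
  choose r hr hzero using fun i ↦ exists_zero_mem_Ioo_of_mul_neg hf (hlu i) (hsign i)
  exact ⟨r, fun i j hij ↦ (hr i).2.trans_le ((hul i j hij).trans (hr j).1.le),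
    fun i ↦ ⟨hr i, hzero i⟩⟩

lemma setOf_isRoot_eq_range {R ι : Type*} [CommRing R] [IsDomain R] [DecidableEq R] [Fintype ι]
    {p : R[X]} (hp : p ≠ 0) {r : ι → R} (hr : Function.Injective r) (hroot : ∀ i, p.IsRoot (r i))
    (hcard : p.roots.toFinset.card ≤ Fintype.card ι) : {x | p.IsRoot x} = range r := by
  have hsub : Finset.univ.image r ⊆ p.roots.toFinset := by
    simpa [Finset.subset_iff, hp] using hroot
  have heq : Finset.univ.image r = p.roots.toFinset := by
    refine Finset.eq_of_subset_of_card_le hsub ?_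
    rwa [Finset.card_image_of_injective _ hr, Finset.card_univ]
  ext x
  simpa [hp] using (Finset.ext_iff.mp heq x).symm

lemma card_roots_toFinset_le_iterate_derivative (p : ℝ[X]) (k : ℕ) :
    p.roots.toFinset.card ≤ (derivative^[k] p).roots.toFinset.card + k := by
  induction k with
  | zero => rfl
  | succ k ih =>
    have := card_roots_toFinset_le_derivative (derivative^[k] p)
    rw [Function.iterate_succ_apply']
    lia

lemma card_roots_toFinset_le_one_of_injective {R : Type*} [CommRing R] [IsDomain R] [DecidableEq R]
    {p : R[X]} (hp : Function.Injective fun x ↦ p.eval x) : p.roots.toFinset.card ≤ 1 := by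
  refine Finset.card_le_one.mpr fun x hx y hy ↦ hp ?_
  exact (isRoot_of_mem_roots (Multiset.mem_toFinset.mp hx)).trans
    (isRoot_of_mem_roots (Multiset.mem_toFinset.mp hy)).symm

lemma encard_eq_add_two_mul_of_conj_mem {s : Set ℂ} (hs : ∀ z ∈ s, conj z ∈ s) :
    s.encard = {x : ℝ | (x : ℂ) ∈ s}.encard + 2 * {z ∈ s | 0 < z.im}.encard := by
  have hreal : {z ∈ s | z.im = 0} = (↑) '' {x : ℝ | (x : ℂ) ∈ s} := by
    ext z
    constructor
    · rintro ⟨hz, him⟩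
      obtain ⟨x, rfl⟩ := Complex.conj_eq_iff_real.mp (Complex.conj_eq_iff_im.mpr him)
      exact ⟨x, hz, rfl⟩
    · rintro ⟨x, hx, rfl⟩
      exact ⟨hx, Complex.ofReal_im x⟩
  have hlower : {z ∈ s | z.im < 0} = conj '' {z ∈ s | 0 < z.im} := by
    ext z
    constructor
    · rintro ⟨hz, him⟩
      exact ⟨conj z, ⟨hs z hz, by simpa using him⟩, Complex.conj_conj z⟩
    · rintro ⟨w, ⟨hw, him⟩, rfl⟩
      exact ⟨hs w hw, by simpa using him⟩
  have hcover : s = {z ∈ s | z.im = 0} ∪ ({z ∈ s | 0 < z.im} ∪ {z ∈ s | z.im < 0}) := by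
    ext z
    have := lt_trichotomy z.im 0
    simp only [mem_union, mem_ofPred_eq]
    tauto
  have hdisj : Disjoint {z ∈ s | 0 < z.im} {z ∈ s | z.im < 0} :=
    disjoint_left.mpr fun z hz hz' ↦ hz.2.not_gt hz'.2
  have hdisj_real : Disjoint {z ∈ s | z.im = 0} ({z ∈ s | 0 < z.im} ∪ {z ∈ s | z.im < 0}) :=
    disjoint_left.mpr fun z hz hz' ↦ hz'.elim (fun h ↦ h.2.ne' hz.2) fun h ↦ h.2.ne hz.2
  conv_lhs => rw [hcover]
  rw [encard_union_eq hdisj_real, encard_union_eq hdisj, hreal, hlower,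
    Complex.ofReal_injective.encard_image, (starRingEnd ℂ).injective.encard_image, two_mul]

/-- The zeros of the harmonic polynomial `conj z ^ 4 - z ^ 2 - a * z - b` with real parameters. -/
def harmonicZeros (a b : ℝ) : Set ℂ := {z | conj z ^ 4 = z ^ 2 + a * z + b}

/-- The restriction of `conj z ^ 4 - z ^ 2 - a * z - b` to the real axis. -/
noncomputable def realAxisQuartic (a b : ℝ) : ℝ[X] := X ^ 4 - X ^ 2 - C a * X - C b

/-- The polynomial satisfied by the real parts of the nonreal zeros of
`conj z ^ 4 - z ^ 2 - a * z - b`, obtained by eliminating the imaginary part. -/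
noncomputable def offAxisSextic (a b : ℝ) : ℝ[X] :=
  C 64 * X ^ 6 + C 32 * X ^ 4 + C (32 * a) * X ^ 3 - C (12 - 16 * b) * X ^ 2 - C (8 * a) * X
    - C (a ^ 2)

section

variable {a b : ℝ}

lemma eval_realAxisQuartic (x : ℝ) :
    (realAxisQuartic a b).eval x = x ^ 4 - x ^ 2 - a * x - b := by
  simp [realAxisQuartic]

lemma eval_offAxisSextic (x : ℝ) :
    (offAxisSextic a b).eval x =
      64 * x ^ 6 + 32 * x ^ 4 + 32 * a * x ^ 3 - (12 - 16 * b) * x ^ 2 - 8 * a * x - a ^ 2 := by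
  simp [offAxisSextic]

lemma natDegree_realAxisQuartic : (realAxisQuartic a b).natDegree = 4 := by
  unfold realAxisQuartic
  compute_degree!

lemma realAxisQuartic_ne_zero : realAxisQuartic a b ≠ 0 :=
  ne_zero_of_natDegree_gt (n := 0) (by simp [natDegree_realAxisQuartic])

lemma natDegree_offAxisSextic : (offAxisSextic a b).natDegree = 6 := by
  unfold offAxisSextic
  compute_degree!

lemma offAxisSextic_ne_zero : offAxisSextic a b ≠ 0 :=
  ne_zero_of_natDegree_gt (n := 0) (by simp [natDegree_offAxisSextic])

lemma eval_iterate_derivative_three_offAxisSextic (x : ℝ) :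
    (derivative^[3] (offAxisSextic a b)).eval x = 7680 * x ^ 3 + 768 * x + 192 * a := by
  simp only [Function.iterate_succ_apply', Function.iterate_zero_apply, offAxisSextic,
    derivative_sub, derivative_add, derivative_C_mul_X_pow, derivative_C_mul_X, derivative_C,
    derivative_zero, eval_sub, eval_add, eval_mul, eval_pow, eval_C, eval_X, eval_zero]
  norm_num
  ring

lemma card_roots_toFinset_offAxisSextic_le : (offAxisSextic a b).roots.toFinset.card ≤ 4 := by
  have hmono : StrictMono fun x ↦ (derivative^[3] (offAxisSextic a b)).eval x := by
    intro x y hxy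
    have := Odd.strictMono_pow (n := 3) (by decide) hxy
    simp only [eval_iterate_derivative_three_offAxisSextic]
    linarith
  have hone := card_roots_toFinset_le_one_of_injective hmono.injective
  have := card_roots_toFinset_le_iterate_derivative (offAxisSextic a b) 3
  lia

lemma conj_mem_harmonicZeros {z : ℂ} (hz : z ∈ harmonicZeros a b) :
    conj z ∈ harmonicZeros a b := by
  simpa [harmonicZeros] using congrArg conj (show conj z ^ 4 = z ^ 2 + a * z + b from hz)

lemma ofReal_mem_harmonicZeros_iff {x : ℝ} :
    (x : ℂ) ∈ harmonicZeros a b ↔ (realAxisQuartic a b).IsRoot x := by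
  rw [harmonicZeros, mem_ofPred_eq, Complex.conj_ofReal, IsRoot, eval_realAxisQuartic]
  norm_cast
  constructor <;> intro h <;> linarith

lemma mem_harmonicZeros_iff_re_im {z : ℂ} :
    z ∈ harmonicZeros a b ↔
      z.re ^ 4 - 6 * z.re ^ 2 * z.im ^ 2 + z.im ^ 4 = z.re ^ 2 - z.im ^ 2 + a * z.re + b ∧
        z.im * (4 * z.re * z.im ^ 2) = z.im * (4 * z.re ^ 3 + 2 * z.re + a) := by
  rw [harmonicZeros, mem_ofPred_eq, Complex.ext_iff]
  simp only [pow_succ, pow_zero, one_mul, Complex.mul_re, Complex.mul_im, Complex.add_re,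
    Complex.add_im, Complex.conj_re, Complex.conj_im, Complex.ofReal_re, Complex.ofReal_im]
  refine and_congr ⟨fun h ↦ ?_, fun h ↦ ?_⟩ ⟨fun h ↦ ?_, fun h ↦ ?_⟩ <;> linear_combination h

lemma ne_zero_of_four_mul_mul_sq_eq (ha : a ≠ 0) {x y : ℝ}
    (h : 4 * x * y ^ 2 = 4 * x ^ 3 + 2 * x + a) : x ≠ 0 := by
  rintro rfl
  exact ha (by linarith)

lemma mem_harmonicZeros_iff_of_im_ne_zero (ha : a ≠ 0) {z : ℂ} (hz : z.im ≠ 0) :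
    z ∈ harmonicZeros a b ↔
      (offAxisSextic a b).IsRoot z.re ∧ 4 * z.re * z.im ^ 2 = 4 * z.re ^ 3 + 2 * z.re + a := by
  rw [mem_harmonicZeros_iff_re_im, mul_right_inj' hz, IsRoot, eval_offAxisSextic]
  refine and_congr_left fun him ↦ ?_
  generalize z.re = x, z.im = y at him ⊢
  have hx : x ≠ 0 := ne_zero_of_four_mul_mul_sq_eq ha him
  have helim : 64 * x ^ 6 + 32 * x ^ 4 + 32 * a * x ^ 3 - (12 - 16 * b) * x ^ 2 - 8 * a * x - a ^ 2
      = -(16 * x ^ 2) * (x ^ 4 - 6 * x ^ 2 * y ^ 2 + y ^ 4 - (x ^ 2 - y ^ 2 + a * x + b)) := by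
    linear_combination (4 * x * (y ^ 2 - x ^ 2) + 6 * x + a - 16 * x ^ 3) * him
  rw [helim, mul_eq_zero_iff_left (neg_ne_zero.mpr (by positivity)), sub_eq_zero]

lemma bijOn_re_upper_harmonicZeros (ha : a ≠ 0) :
    BijOn Complex.re {z ∈ harmonicZeros a b | 0 < z.im}
      {x | (offAxisSextic a b).IsRoot x ∧ 0 < x * (4 * x ^ 3 + 2 * x + a)} := by
  refine ⟨?_, ?_, ?_⟩
  · rintro z ⟨hz, him⟩
    obtain ⟨hroot, hsq⟩ := (mem_harmonicZeros_iff_of_im_ne_zero ha him.ne').mp hz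
    have hre : z.re ≠ 0 := ne_zero_of_four_mul_mul_sq_eq ha hsq
    refine ⟨hroot, ?_⟩
    calc 0 < (2 * z.re * z.im) ^ 2 := by positivity
      _ = z.re * (4 * z.re ^ 3 + 2 * z.re + a) := by rw [← hsq]; ring
  · rintro z ⟨hz, him⟩ w ⟨hw, hwim⟩ hre
    have hzsq := ((mem_harmonicZeros_iff_of_im_ne_zero ha him.ne').mp hz).2
    have hwsq := ((mem_harmonicZeros_iff_of_im_ne_zero ha hwim.ne').mp hw).2
    have hwre : w.re ≠ 0 := ne_zero_of_four_mul_mul_sq_eq ha hwsq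
    have hsq : z.im ^ 2 = w.im ^ 2 := by
      rw [hre, ← hwsq] at hzsq
      exact mul_left_cancel₀ (by positivity) hzsq
    exact Complex.ext hre ((pow_left_inj₀ him.le hwim.le two_ne_zero).mp hsq)
  · rintro x ⟨hroot, hpos⟩
    have hx : x ≠ 0 := left_ne_zero_of_mul hpos.ne'
    have hq : 0 < x * (4 * x ^ 3 + 2 * x + a) / (2 * x) ^ 2 := div_pos hpos (by positivity)
    set y := √(x * (4 * x ^ 3 + 2 * x + a) / (2 * x) ^ 2) with hy_def
    have hy : 0 < y := Real.sqrt_pos.mpr hq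
    refine ⟨⟨x, y⟩, ⟨(mem_harmonicZeros_iff_of_im_ne_zero ha hy.ne').mpr ⟨hroot, ?_⟩, hy⟩, rfl⟩
    rw [hy_def, Real.sq_sqrt hq.le]
    field_simp
    norm_num

lemma encard_harmonicZeros (ha : a ≠ 0) :
    (harmonicZeros a b).encard = {x | (realAxisQuartic a b).IsRoot x}.encard +
      2 * {x | (offAxisSextic a b).IsRoot x ∧ 0 < x * (4 * x ^ 3 + 2 * x + a)}.encard := by
  have hre := bijOn_re_upper_harmonicZeros (b := b) ha
  rw [encard_eq_add_two_mul_of_conj_mem fun z ↦ conj_mem_harmonicZeros, ← hre.image_eq,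
    hre.injOn.encard_image]
  simp only [ofReal_mem_harmonicZeros_iff]

end

lemma encard_isRoot_realAxisQuartic :
    {x | (realAxisQuartic (1 / 2) (1 / 15)).IsRoot x}.encard = 4 := by
  obtain ⟨r, hmono, hr⟩ := exists_strictMono_zeros (realAxisQuartic (1 / 2) (1 / 15)).continuous
    (l := ![-1, -1 / 2, -3 / 10, -1 / 5]) (u := ![-1 / 2, -3 / 10, -1 / 5, 2])
    (by intro i; fin_cases i <;> norm_num)
    (by intro i j; fin_cases i <;> fin_cases j <;> norm_num)
    (by intro i; fin_cases i <;> norm_num [eval_realAxisQuartic])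
  have hcard : (realAxisQuartic (1 / 2) (1 / 15)).roots.toFinset.card ≤ Fintype.card (Fin 4) :=
    (Multiset.toFinset_card_le _).trans ((card_roots' _).trans_eq natDegree_realAxisQuartic)
  rw [setOf_isRoot_eq_range realAxisQuartic_ne_zero hmono.injective (fun i ↦ (hr i).2) hcard,
    ← image_univ, hmono.injective.encard_image]
  simp

lemma mul_cubic_pos_of_lt {x : ℝ} (hx : x < -5 / 22) : 0 < x * (4 * x ^ 3 + 2 * x + 1 / 2) := by
  have hcube : x ^ 3 < (-5 / 22) ^ 3 := Odd.strictMono_pow (by decide) hx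
  exact mul_pos_of_neg_of_neg (by linarith) (by linarith)

lemma mul_cubic_neg_of_mem_Ioo {x : ℝ} (hx : x ∈ Ioo (-1 / 10) 0) :
    x * (4 * x ^ 3 + 2 * x + 1 / 2) < 0 := by
  have hcube : (-1 / 10) ^ 3 < x ^ 3 := Odd.strictMono_pow (by decide) hx.1
  exact mul_neg_of_neg_of_pos hx.2 (by linarith [hx.1])

lemma encard_isRoot_offAxisSextic_and_pos :
    {x : ℝ | (offAxisSextic (1 / 2) (1 / 15)).IsRoot x ∧
      0 < x * (4 * x ^ 3 + 2 * x + 1 / 2)}.encard = 3 := by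
  -- `-5 / 22` separates the second root from the real zero of `4 * x ^ 3 + 2 * x + 1 / 2`, both of
  -- which lie within `10⁻³` of it.
  obtain ⟨r, hmono, hr⟩ := exists_strictMono_zeros (offAxisSextic (1 / 2) (1 / 15)).continuous
    (l := ![-1 / 2, -2 / 5, -1 / 10, 0]) (u := ![-2 / 5, -5 / 22, 0, 1])
    (by intro i; fin_cases i <;> norm_num)
    (by intro i j; fin_cases i <;> fin_cases j <;> norm_num)
    (by intro i; fin_cases i <;> norm_num [eval_offAxisSextic])
  have hroots := setOf_isRoot_eq_range offAxisSextic_ne_zero hmono.injective (fun i ↦ (hr i).2)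
    (by simpa using card_roots_toFinset_offAxisSextic_le)
  have hlift (i : Fin 4) : 0 < r i * (4 * r i ^ 3 + 2 * r i + 1 / 2) ↔ i ≠ 2 := by
    fin_cases i
    · have hu : r 0 < -2 / 5 := (hr 0).1.2
      simpa using mul_cubic_pos_of_lt (hu.trans (by norm_num))
    · have hu : r 1 < -5 / 22 := (hr 1).1.2
      simpa using mul_cubic_pos_of_lt hu
    · simpa using (mul_cubic_neg_of_mem_Ioo (hr 2).1).le
    · have hl : 0 < r 3 := (hr 3).1.1
      simpa using mul_pos hl (by positivity : 0 < 4 * r 3 ^ 3 + 2 * r 3 + 1 / 2)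
  have himage : {x : ℝ | (offAxisSextic (1 / 2) (1 / 15)).IsRoot x ∧
      0 < x * (4 * x ^ 3 + 2 * x + 1 / 2)} = r '' {2}ᶜ := by
    rw [ofPred_and, hroots, ← image_preimage_eq_range_inter]
    exact congrArg (r '' ·) (ext hlift)
  have hcompl : ({2}ᶜ : Set (Fin 4)) = ↑({2}ᶜ : Finset (Fin 4)) := by simp
  rw [himage, hmono.injective.encard_image, hcompl, encard_coe_eq_coe_finsetCard]
  rfl

/-- the harmonic polynomial `p(z) = 30 conj(z)⁴ - 30z² - 15z - 2`
has exactly 10 zeros. -/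
theorem stmt_11 :
    {z : ℂ | 30 * (starRingEnd ℂ z) ^ 4 = 30 * z ^ 2 + 15 * z + 2}.Finite ∧
      {z : ℂ | 30 * (starRingEnd ℂ z) ^ 4 = 30 * z ^ 2 + 15 * z + 2}.ncard = 10 := by
  have hscale : {z : ℂ | 30 * (starRingEnd ℂ z) ^ 4 = 30 * z ^ 2 + 15 * z + 2} =
      harmonicZeros (1 / 2) (1 / 15) := by
    ext z
    simp only [harmonicZeros, mem_ofPred_eq]
    push_cast
    constructor <;> intro h
    · linear_combination h / 30
    · linear_combination 30 * h
  have hcard : (harmonicZeros (1 / 2) (1 / 15)).encard = 10 := by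
    rw [encard_harmonicZeros (by norm_num), encard_isRoot_realAxisQuartic,
      encard_isRoot_offAxisSextic_and_pos]
    norm_num
  rw [hscale]
  exact ⟨finite_of_encard_eq_coe hcard, by rw [ncard, hcard]; rfl⟩
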